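/- arXiv:1811.10967 — 4 statements merged into one kernel-verified Lean document; each statement's English description precedes it below -/
import Mathlib

section
/- For every integer m ≥ 3, there are at least 2^m partitions of m(m+1)/2 that are comparable in dominance order to the staircase partition ρ_m (i.e., |C(ρ_m)| ≥ 2^m). In particular, there are at least 2^{m−1} partitions of m(m+1)/2 that are strictly dominated by ρ_m. -/
/-- `f` represents a partition of `n`: a weakly decreasing sequence (0-indexed,
padded with zeros) whose parts sum to `n`. Any partition of `n` has at most `n`
nonzero parts, so we may demand `f i = 0` for `i ≥ n`. -/
def IsPartitionOf (n : ℕ) (f : ℕ → ℕ) : Prop :=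
  (∀ i j, i ≤ j → f j ≤ f i) ∧ (∀ i, n ≤ i → f i = 0) ∧ ∑ i ∈ Finset.range n, f i = n

/-- `DominatedBy f g` means `f ⊴ g` in dominance order: every partial sum of `f`
is at most the corresponding partial sum of `g`. -/
def DominatedBy (f g : ℕ → ℕ) : Prop :=
  ∀ k, ∑ i ∈ Finset.range k, f i ≤ ∑ i ∈ Finset.range k, g i

/-- The conjugate (transpose) partition: its `i`-th part (0-indexed) is the number
of parts of `f` that are `> i`. -/
noncomputable def conjugate (f : ℕ → ℕ) : ℕ → ℕ := fun i => Set.ncard {j | i < f j}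

/-- The staircase partition `ρ_m = (m, m-1, …, 2, 1)` (0-indexed). -/
def staircase (m : ℕ) : ℕ → ℕ := fun i => m - i

/-!
Conjugation reverses dominance and fixes `ρ_m`, so as many partitions lie below `ρ_m` as above it,
and it suffices to find `2 ^ (m - 1) + 1` partitions dominating `ρ_m`, counting `ρ_m` itself.

Dominance is compatible with adding diagrams row by row, and `ρ_{m+1}` is `ρ_m` plus the column
`(1^{m+1})`, which is dominated by the hook `(2, 1^{m-1})`. Hence a partition above `ρ_m` gives two
partitions above `ρ_{m+1}`, by adding the column or the hook. It has at most `m` parts, so the two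
differ in row `m` (counted from zero) and the number of partitions above at least doubles. Starting
from `ρ_1` this yields `2 ^ (m - 1)` of them. The one-row partition accounts for the extra `1`: from
`ρ_2` on, adding the column or the hook makes the second row nonempty.
-/

open Finset

namespace IsPartitionOf

variable {n k : ℕ} {f g : ℕ → ℕ}

protected lemma antitone (hf : IsPartitionOf n f) : Antitone f := fun i j hij => hf.1 i j hij

lemma sum_range_of_eq_zero (hf : IsPartitionOf n f) (hk : f k = 0) : ∑ i ∈ range k, f i = n := by
  have hzero : ∀ i ≥ k, f i = 0 := fun i hi => Nat.eq_zero_of_le_zero (hk ▸ hf.antitone hi)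
  rcases le_total k n with h | h
  · exact (eventually_constant_sum hzero h).symm.trans hf.2.2
  · exact (eventually_constant_sum hf.2.1 h).trans hf.2.2

lemma sum_range_of_le (hf : IsPartitionOf n f) (hk : n ≤ k) : ∑ i ∈ range k, f i = n :=
  hf.sum_range_of_eq_zero (hf.2.1 k hk)

lemma sum_range_le (hf : IsPartitionOf n f) (k : ℕ) : ∑ i ∈ range k, f i ≤ n :=
  (sum_le_sum_of_subset (range_mono (le_max_left k n))).trans_eq
    (hf.sum_range_of_le (le_max_right k n))

lemma apply_le (hf : IsPartitionOf n f) (i : ℕ) : f i ≤ n :=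
  (single_le_sum_of_canonicallyOrdered (self_mem_range_succ i)).trans (hf.sum_range_le (i + 1))

lemma eq_zero_of_sum_range_eq (hf : IsPartitionOf n f) (hk : n ≤ ∑ i ∈ range k, f i) :
    f k = 0 := by
  have h := hf.sum_range_le (k + 1)
  rw [sum_range_succ] at h
  omega

protected lemma add {a b : ℕ} (hf : IsPartitionOf a f) (hg : IsPartitionOf b g) :
    IsPartitionOf (a + b) (f + g) := by
  refine ⟨fun i j hij => hf.antitone.add hg.antitone hij, fun i hi => ?_, ?_⟩
  · rw [Pi.add_apply, hf.2.1 i (by omega), hg.2.1 i (by omega)]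
  · simp only [Pi.add_apply, sum_add_distrib, hf.sum_range_of_le (Nat.le_add_right a b),
      hg.sum_range_of_le (Nat.le_add_left b a)]

lemma piSingle_zero (n : ℕ) : IsPartitionOf n (Pi.single 0 n) := by
  refine ⟨fun i j hij => ?_, fun i hi => ?_, ?_⟩
  · simp only [Pi.single_apply]
    split_ifs <;> omega
  · simp only [Pi.single_apply]
    split_ifs <;> omega
  · simp only [sum_pi_single', mem_range]
    split_ifs <;> omega

end IsPartitionOf

lemma finite_setOf_isPartitionOf (n : ℕ) : {f | IsPartitionOf n f}.Finite := by
  refine (piAntidiag (range n) n).finite_toSet.subset fun f hf => mem_coe.2 (mem_piAntidiag.2 ?_)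
  refine ⟨hf.2.2, fun i hi => mem_range.2 ?_⟩
  contrapose! hi
  exact hf.2.1 i hi

namespace DominatedBy

variable {f g f' g' : ℕ → ℕ}

protected lemma refl (f : ℕ → ℕ) : DominatedBy f f := fun _ => le_rfl

protected lemma antisymm (hfg : DominatedBy f g) (hgf : DominatedBy g f) : f = g := by
  have hsum k : ∑ i ∈ range k, f i = ∑ i ∈ range k, g i := le_antisymm (hfg k) (hgf k)
  funext i
  simpa only [sum_range_succ, hsum i, Nat.add_left_cancel_iff] using hsum (i + 1)

protected lemma add (h : DominatedBy f g) (h' : DominatedBy f' g') :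
    DominatedBy (f + f') (g + g') := fun k => by
  simpa only [Pi.add_apply, sum_add_distrib] using Nat.add_le_add (h k) (h' k)

end DominatedBy

lemma IsPartitionOf.dominatedBy_piSingle_zero {n : ℕ} {f : ℕ → ℕ} (hf : IsPartitionOf n f) :
    DominatedBy f (Pi.single 0 n) := by
  intro k
  rcases k.eq_zero_or_pos with rfl | hk
  · simp
  · simpa only [sum_pi_single', mem_range, if_pos hk] using hf.sum_range_le k

/-- The partition `(1^a)`, whose diagram is a single column of length `a`. Diagrams are assembled
from columns by pointwise addition. -/
def column (a : ℕ) : ℕ → ℕ := fun i => if i < a then 1 else 0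

lemma sum_range_column (a k : ℕ) : ∑ i ∈ range k, column a i = min a k := by
  have hfilter : {i ∈ range k | i < a} = range (min a k) := by
    ext i
    simp only [mem_filter, mem_range, lt_min_iff, and_comm]
  simp only [column, ← card_filter, hfilter, card_range]

lemma isPartitionOf_column (a : ℕ) : IsPartitionOf a (column a) := by
  refine ⟨fun i j hij => ?_, fun i hi => if_neg hi.not_gt, by rw [sum_range_column, min_self]⟩
  simp only [column]
  split_ifs <;> omega

lemma column_add_dominatedBy (a b : ℕ) : DominatedBy (column (a + b)) (column a + column b) := by
  intro k
  simp only [Pi.add_apply, sum_add_distrib, sum_range_column]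
  omega

section Conjugate

variable {n : ℕ} {f g : ℕ → ℕ}

lemma IsPartitionOf.conjugate_apply (hf : IsPartitionOf n f) (j : ℕ) :
    conjugate f j = ∑ i ∈ range n, column (f i) j := by
  have hparts : {i | j < f i} = ({i ∈ range n | j < f i} : Finset ℕ) := by
    ext i
    simp only [Set.mem_ofPred_eq, coe_filter, mem_range, iff_and_self]
    intro hi
    by_contra hin
    rw [hf.2.1 i (by omega)] at hi
    omega
  rw [conjugate, hparts, Set.ncard_coe_finset, card_filter]
  rfl

lemma IsPartitionOf.sum_range_conjugate (hf : IsPartitionOf n f) (k : ℕ) :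
    ∑ j ∈ range k, conjugate f j = ∑ i ∈ range n, min (f i) k := by
  simp only [hf.conjugate_apply, ← sum_range_column]
  exact sum_comm

lemma IsPartitionOf.lt_conjugate_iff (hf : IsPartitionOf n f) {i j : ℕ} :
    i < conjugate f j ↔ j < f i := by
  have hfin : {a | j < f a}.Finite := (Set.finite_Iio n).subset fun a ha => by
    by_contra hna
    exact absurd (hf.2.1 a (not_lt.1 hna)) (Nat.ne_zero_of_lt ha)
  constructor
  · contrapose!
    intro hi
    have hsub : {a | j < f a} ⊆ Set.Iio i := fun a ha => by
      by_contra hia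
      exact (ha.trans_le (hf.antitone (not_lt.1 hia))).not_ge hi
    exact (Set.ncard_le_ncard hsub (Set.finite_Iio i)).trans_eq (Set.ncard_Iio_nat i)
  · intro hi
    have hsub : Set.Iic i ⊆ {a | j < f a} := fun a ha => hi.trans_le (hf.antitone ha)
    exact (Set.ncard_Iic_nat i).symm.trans_le (Set.ncard_le_ncard hsub hfin)

protected lemma IsPartitionOf.conjugate (hf : IsPartitionOf n f) :
    IsPartitionOf n (conjugate f) := by
  refine ⟨fun i j hij => le_of_forall_lt fun a ha => ?_, fun j hj => ?_, ?_⟩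
  · exact hf.lt_conjugate_iff.2 (hij.trans_lt (hf.lt_conjugate_iff.1 ha))
  · by_contra hne
    exact ((hf.lt_conjugate_iff.1 (Nat.pos_of_ne_zero hne)).trans_le (hf.apply_le 0)).not_ge hj
  · simp only [hf.sum_range_conjugate, min_eq_left (hf.apply_le _), hf.2.2]

lemma IsPartitionOf.conjugate_conjugate (hf : IsPartitionOf n f) :
    conjugate (conjugate f) = f :=
  funext fun _ => eq_of_forall_lt_iff fun _ =>
    hf.conjugate.lt_conjugate_iff.trans hf.lt_conjugate_iff

/-- The left side counts twice the boxes lying both in the first `l` rows and in the first `k`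
columns; there are at most `l * k` of these. -/
lemma IsPartitionOf.sum_conjugate_add_sum_le (hf : IsPartitionOf n f) {l : ℕ} (hl : l ≤ n)
    (k : ℕ) : ∑ j ∈ range k, conjugate f j + ∑ i ∈ range l, f i ≤ n + l * k := by
  have hrows : ∑ i ∈ range l, min (f i) k ≤ l * k := by
    simpa using sum_le_card_nsmul (range l) _ k fun i _ => min_le_right (f i) k
  have htail : ∑ i ∈ Ico l n, min (f i) k ≤ ∑ i ∈ Ico l n, f i :=
    sum_le_sum fun i _ => min_le_left (f i) k
  have hsplit := sum_range_add_sum_Ico f hl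
  rw [hf.2.2] at hsplit
  rw [hf.sum_range_conjugate, ← sum_range_add_sum_Ico _ hl]
  omega

lemma IsPartitionOf.sum_conjugate_add_sum_eq (hf : IsPartitionOf n f) (k : ℕ) :
    ∑ j ∈ range k, conjugate f j + ∑ i ∈ range (conjugate f k), f i =
      n + conjugate f k * k := by
  have hl : conjugate f k ≤ n := hf.conjugate.apply_le k
  have hrows : ∑ i ∈ range (conjugate f k), min (f i) k = conjugate f k * k := by
    rw [sum_congr rfl fun i hi =>
      min_eq_right (hf.lt_conjugate_iff.1 (mem_range.1 hi)).le, sum_const, card_range, smul_eq_mul]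
  have htail : ∑ i ∈ Ico (conjugate f k) n, min (f i) k = ∑ i ∈ Ico (conjugate f k) n, f i :=
    sum_congr rfl fun i hi => min_eq_left <| not_lt.1 <|
      hf.lt_conjugate_iff.not.1 (mem_Ico.1 hi).1.not_gt
  have hsplit := sum_range_add_sum_Ico f hl
  rw [hf.2.2] at hsplit
  rw [hf.sum_range_conjugate, ← sum_range_add_sum_Ico _ hl]
  omega

protected lemma DominatedBy.conjugate (hf : IsPartitionOf n f) (hg : IsPartitionOf n g)
    (h : DominatedBy f g) : DominatedBy (conjugate g) (conjugate f) := by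
  intro k
  have hle := hg.sum_conjugate_add_sum_le (hf.conjugate.apply_le k) k
  have heq := hf.sum_conjugate_add_sum_eq k
  have hdom := h (conjugate f k)
  omega

end Conjugate

/-- The partitions of `n` that dominate `g`, including `g` itself if it is a partition of `n`. -/
def partitionsAbove (n : ℕ) (g : ℕ → ℕ) : Set (ℕ → ℕ) :=
  {f | IsPartitionOf n f ∧ DominatedBy g f}

/-- The partitions of `n` that `g` dominates, including `g` itself if it is a partition of `n`. -/
def partitionsBelow (n : ℕ) (g : ℕ → ℕ) : Set (ℕ → ℕ) :=
  {f | IsPartitionOf n f ∧ DominatedBy f g}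

section Comparable

variable {n m : ℕ} {f g : ℕ → ℕ}

lemma finite_partitionsAbove (n : ℕ) (g : ℕ → ℕ) : (partitionsAbove n g).Finite :=
  (finite_setOf_isPartitionOf n).subset fun _ hf => hf.1

lemma finite_partitionsBelow (n : ℕ) (g : ℕ → ℕ) : (partitionsBelow n g).Finite :=
  (finite_setOf_isPartitionOf n).subset fun _ hf => hf.1

lemma IsPartitionOf.mem_partitionsAbove (hg : IsPartitionOf n g) : g ∈ partitionsAbove n g :=
  ⟨hg, .refl g⟩

lemma IsPartitionOf.mem_partitionsBelow (hg : IsPartitionOf n g) : g ∈ partitionsBelow n g :=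
  ⟨hg, .refl g⟩

lemma IsPartitionOf.partitionsBelow_inter_partitionsAbove (hg : IsPartitionOf n g) :
    partitionsBelow n g ∩ partitionsAbove n g = {g} :=
  Set.Subset.antisymm (fun _ hf => hf.1.2.antisymm hf.2.2)
    (Set.singleton_subset_iff.2 ⟨hg.mem_partitionsBelow, hg.mem_partitionsAbove⟩)

lemma IsPartitionOf.ncard_partitionsBelow_conjugate (hg : IsPartitionOf n g) :
    (partitionsBelow n (conjugate g)).ncard = (partitionsAbove n g).ncard := by
  have hinv : Set.InvOn conjugate conjugate (partitionsBelow n (conjugate g))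
      (partitionsAbove n g) :=
    ⟨fun _ hf => hf.1.conjugate_conjugate, fun _ hf => hf.1.conjugate_conjugate⟩
  refine (hinv.bijOn (fun f hf => ⟨hf.1.conjugate, ?_⟩) fun f hf => ⟨hf.1.conjugate, ?_⟩).ncard_eq
  · simpa only [hg.conjugate_conjugate] using hf.2.conjugate hf.1 hg.conjugate
  · exact hf.2.conjugate hg hf.1

lemma IsPartitionOf.apply_eq_zero_of_mem_partitionsAbove (hg : IsPartitionOf n g) (hgm : g m = 0)
    (hf : f ∈ partitionsAbove n g) : f m = 0 :=
  hf.1.eq_zero_of_sum_range_eq ((hg.sum_range_of_eq_zero hgm).symm.trans_le (hf.2 m))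

end Comparable

/-- The sequences obtained from a member of `s` by adding the column `(1^{m+1})` or the hook
`(2, 1^{m-1})`. The hook is written as a sum of two columns, so it is the intended diagram only for
`m ≥ 1`. -/
def columnOrHookExtensions (m : ℕ) (s : Set (ℕ → ℕ)) : Set (ℕ → ℕ) :=
  (· + column (m + 1)) '' s ∪ (· + (column m + column 1)) '' s

section Extensions

variable {n m : ℕ} {g : ℕ → ℕ}

lemma columnOrHookExtensions_subset_partitionsAbove :
    columnOrHookExtensions m (partitionsAbove n g) ⊆
      partitionsAbove (n + (m + 1)) (g + column (m + 1)) := by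
  rintro _ (⟨f, hf, rfl⟩ | ⟨f, hf, rfl⟩)
  · exact ⟨hf.1.add (isPartitionOf_column _), hf.2.add (.refl _)⟩
  · exact ⟨hf.1.add ((isPartitionOf_column _).add (isPartitionOf_column _)),
      hf.2.add (column_add_dominatedBy m 1)⟩

lemma ncard_columnOrHookExtensions (hm : 1 ≤ m) {s : Set (ℕ → ℕ)} (hs : s.Finite)
    (hsm : ∀ f ∈ s, f m = 0) : (columnOrHookExtensions m s).ncard = 2 * s.ncard := by
  have hdisj : Disjoint ((· + column (m + 1)) '' s) ((· + (column m + column 1)) '' s) := by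
    rw [Set.disjoint_left]
    rintro _ ⟨f, hf, rfl⟩ ⟨f', hf', heq⟩
    have hrow := congrFun heq m
    simp [column, hsm f hf, hsm f' hf', Nat.ne_zero_of_lt hm] at hrow
  rw [columnOrHookExtensions, Set.ncard_union_eq hdisj (hs.image _) (hs.image _),
    Set.ncard_image_of_injective s (add_left_injective _),
    Set.ncard_image_of_injective s (add_left_injective _), two_mul]

lemma IsPartitionOf.ncard_columnOrHookExtensions_partitionsAbove (hg : IsPartitionOf n g)
    (hm : 1 ≤ m) (hgm : g m = 0) :
    (columnOrHookExtensions m (partitionsAbove n g)).ncard = 2 * (partitionsAbove n g).ncard :=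
  ncard_columnOrHookExtensions hm (finite_partitionsAbove n g) fun _ =>
    hg.apply_eq_zero_of_mem_partitionsAbove hgm

lemma piSingle_zero_notMem_columnOrHookExtensions (hm : 2 ≤ m) (N : ℕ) (s : Set (ℕ → ℕ)) :
    Pi.single 0 N ∉ columnOrHookExtensions m s := by
  rintro (⟨f, -, heq⟩ | ⟨f, -, heq⟩)
  all_goals
    have hrow := congrFun heq 1
    simp only [column, Pi.add_apply, Pi.single_apply] at hrow
    split_ifs at hrow <;> omega

lemma IsPartitionOf.two_mul_ncard_partitionsAbove_le (hg : IsPartitionOf n g) (hm : 1 ≤ m)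
    (hgm : g m = 0) :
    2 * (partitionsAbove n g).ncard ≤
      (partitionsAbove (n + (m + 1)) (g + column (m + 1))).ncard := by
  rw [← hg.ncard_columnOrHookExtensions_partitionsAbove hm hgm]
  exact Set.ncard_le_ncard columnOrHookExtensions_subset_partitionsAbove
    (finite_partitionsAbove _ _)

lemma IsPartitionOf.two_mul_ncard_partitionsAbove_lt (hg : IsPartitionOf n g) (hm : 2 ≤ m)
    (hgm : g m = 0) :
    2 * (partitionsAbove n g).ncard <
      (partitionsAbove (n + (m + 1)) (g + column (m + 1))).ncard := by
  rw [← hg.ncard_columnOrHookExtensions_partitionsAbove (by omega) hgm]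
  refine Set.ncard_lt_ncard
    ⟨columnOrHookExtensions_subset_partitionsAbove, fun hsub => ?_⟩ (finite_partitionsAbove _ _)
  exact piSingle_zero_notMem_columnOrHookExtensions hm _ _ <| hsub
    ⟨.piSingle_zero _, (hg.add (isPartitionOf_column _)).dominatedBy_piSingle_zero⟩

end Extensions

lemma staircase_self (m : ℕ) : staircase m m = 0 := Nat.sub_self m

lemma staircase_succ (m : ℕ) : staircase (m + 1) = staircase m + column (m + 1) := by
  funext i
  simp only [staircase, column, Pi.add_apply]
  split_ifs <;> omega

lemma triangle_succ (m : ℕ) : (m + 1) * (m + 1 + 1) / 2 = m * (m + 1) / 2 + (m + 1) := by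
  simpa only [Nat.add_sub_cancel, mul_comm] using Nat.triangle_succ (m + 1)

lemma isPartitionOf_staircase (m : ℕ) : IsPartitionOf (m * (m + 1) / 2) (staircase m) := by
  induction m with
  | zero => exact ⟨fun _ _ _ => by simp [staircase], fun _ _ => by simp [staircase], rfl⟩
  | succ m ih =>
    rw [triangle_succ, staircase_succ]
    exact ih.add (isPartitionOf_column _)

lemma conjugate_staircase (m : ℕ) : conjugate (staircase m) = staircase m := by
  funext i
  refine eq_of_forall_lt_iff fun j => (isPartitionOf_staircase m).lt_conjugate_iff.trans ?_
  simp only [staircase]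
  omega

lemma two_pow_le_ncard_partitionsAbove_staircase (m : ℕ) :
    2 ^ m ≤ (partitionsAbove ((m + 1) * (m + 1 + 1) / 2) (staircase (m + 1))).ncard := by
  induction m with
  | zero =>
    exact (Set.ncard_pos (finite_partitionsAbove _ _)).2
      ⟨_, (isPartitionOf_staircase 1).mem_partitionsAbove⟩
  | succ m ih =>
    rw [triangle_succ, staircase_succ, pow_succ']
    exact (Nat.mul_le_mul_left 2 ih).trans <|
      (isPartitionOf_staircase _).two_mul_ncard_partitionsAbove_le (by omega) (staircase_self _)

lemma two_pow_lt_ncard_partitionsAbove_staircase {m : ℕ} (hm : 2 ≤ m) :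
    2 ^ m < (partitionsAbove ((m + 1) * (m + 1 + 1) / 2) (staircase (m + 1))).ncard := by
  obtain ⟨k, rfl⟩ := Nat.exists_eq_add_of_le' (show 1 ≤ m by omega)
  rw [triangle_succ, staircase_succ, pow_succ']
  exact (Nat.mul_le_mul_left 2 (two_pow_le_ncard_partitionsAbove_staircase k)).trans_lt <|
    (isPartitionOf_staircase _).two_mul_ncard_partitionsAbove_lt hm (staircase_self _)

/-- For `m ≥ 3` there are at least `2^m` partitions of `m(m+1)/2`
comparable in dominance order to `ρ_m`; in particular at least `2^(m-1)` partitions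
strictly dominated by `ρ_m`. -/
theorem stmt0 (m : ℕ) (hm : 3 ≤ m) :
    2 ^ m ≤ Set.ncard {f : ℕ → ℕ | IsPartitionOf (m * (m + 1) / 2) f ∧
      (DominatedBy f (staircase m) ∨ DominatedBy (staircase m) f)} ∧
    2 ^ (m - 1) ≤ Set.ncard {f : ℕ → ℕ | IsPartitionOf (m * (m + 1) / 2) f ∧
      DominatedBy f (staircase m) ∧ f ≠ staircase m} := by
  obtain ⟨k, rfl⟩ := Nat.exists_eq_add_of_le' (show 1 ≤ m by omega)
  set n := (k + 1) * (k + 1 + 1) / 2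
  set ρ := staircase (k + 1)
  have hρ : IsPartitionOf n ρ := isPartitionOf_staircase (k + 1)
  have habove : 2 ^ k < (partitionsAbove n ρ).ncard :=
    two_pow_lt_ncard_partitionsAbove_staircase (by omega)
  have hbelow : (partitionsBelow n ρ).ncard = (partitionsAbove n ρ).ncard := by
    simpa only [ρ, conjugate_staircase] using hρ.ncard_partitionsBelow_conjugate
  have hcomparable : {f | IsPartitionOf n f ∧ (DominatedBy f ρ ∨ DominatedBy ρ f)} =
      partitionsBelow n ρ ∪ partitionsAbove n ρ := Set.ext fun _ => and_or_left
  have hstrict : {f | IsPartitionOf n f ∧ DominatedBy f ρ ∧ f ≠ ρ} = partitionsBelow n ρ \ {ρ} :=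
    Set.ext fun _ => and_assoc.symm
  constructor
  · have hcard := Set.ncard_union_add_ncard_inter _ _ (finite_partitionsBelow n ρ)
      (finite_partitionsAbove n ρ)
    rw [hρ.partitionsBelow_inter_partitionsAbove, Set.ncard_singleton] at hcard
    rw [hcomparable, pow_succ]
    omega
  · rw [hstrict, Set.ncard_sdiff_singleton_of_mem hρ.mem_partitionsBelow, Nat.add_sub_cancel]
    omega
end

section
/- Let m ≥ 2 and let λ be a partition of (m−1)m/2 with λ ⊴ ρ_{m−1}. Then the partition (m, λ_1, λ_2, …) obtained by prepending a part m to λ, and the partition (λ_1, …, λ_{ℓ(λ)}, 1, 1, …, 1) obtained by appending m parts equal to 1 to λ, are both partitions of m(m+1)/2 that are dominated by ρ_m. Moreover, for λ ≠ μ in Λ(ρ_{m−1}), the four partitions (m,λ), (λ,1^m), (m,μ), (μ,1^m) are pairwise distinct. -/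
/-- The number of nonzero parts of a partition. -/
noncomputable def plength (f : ℕ → ℕ) : ℕ := Set.ncard {i | 0 < f i}

/-- Prepend a part `a` in front of the partition `f`. -/
def prependPart (a : ℕ) (f : ℕ → ℕ) : ℕ → ℕ := fun i => if i = 0 then a else f (i - 1)

/-- Append `a` parts equal to `1` after the last nonzero part of `f`. -/
noncomputable def appendOnes (a : ℕ) (f : ℕ → ℕ) : ℕ → ℕ :=
  fun i => if i < plength f then f i else if i < plength f + a then 1 else 0

/-- Add one box to each of the `a` rows `p, p + 1, …, p + a - 1` (0-indexed) of `f`. For `p = 0`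
this adds a full column, for `p = ℓ(f)` it appends `a` parts equal to `1`. For other values of `p`
the result need not be weakly decreasing. -/
def addStrip (p a : ℕ) (f : ℕ → ℕ) : ℕ → ℕ :=
  fun i => f i + if p ≤ i ∧ i < p + a then 1 else 0

section

variable {n k a : ℕ} {f g : ℕ → ℕ}

theorem IsPartitionOf.antitone_s1 (hf : IsPartitionOf n f) : Antitone f := hf.1

theorem IsPartitionOf.apply_eq_zero (hf : IsPartitionOf n f) {i : ℕ} (hi : n ≤ i) : f i = 0 :=
  hf.2.1 i hi

theorem plength_eq_of_pos_iff_lt {l : ℕ} (h : ∀ i, 0 < f i ↔ i < l) : plength f = l := by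
  simp only [plength, h, ← Finset.mem_range, Finset.setOfPred_mem, Set.ncard_coe_finset,
    Finset.card_range]

theorem IsPartitionOf.pos_iff_lt_plength (hf : IsPartitionOf n f) (i : ℕ) :
    0 < f i ↔ i < plength f := by
  have exists_zero : ∃ p, f p = 0 := ⟨n, hf.apply_eq_zero le_rfl⟩
  have pos_iff_lt_find (i : ℕ) : 0 < f i ↔ i < Nat.find exists_zero := by
    rw [Nat.lt_find_iff]
    exact ⟨fun hi j hj => (hi.trans_le (hf.antitone_s1 hj)).ne',
      fun h => Nat.pos_of_ne_zero (h i le_rfl)⟩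
  rw [pos_iff_lt_find, plength_eq_of_pos_iff_lt pos_iff_lt_find]

theorem IsPartitionOf.plength_le (hf : IsPartitionOf n f) : plength f ≤ n :=
  not_lt.mp fun h => ((hf.pos_iff_lt_plength n).mpr h).ne' (hf.apply_eq_zero le_rfl)

theorem IsPartitionOf.sum_range (hf : IsPartitionOf n f) (hk : n ≤ k) :
    ∑ i ∈ Finset.range k, f i = n :=
  (Finset.eventually_constant_sum (fun _ => hf.apply_eq_zero) hk).trans hf.2.2

theorem DominatedBy.apply_zero_le (h : DominatedBy f g) : f 0 ≤ g 0 := by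
  simpa using h 1

theorem sum_range_succ_prependPart (a k : ℕ) (f : ℕ → ℕ) :
    ∑ i ∈ Finset.range (k + 1), prependPart a f i = ∑ i ∈ Finset.range k, f i + a := by
  simp [Finset.sum_range_succ', prependPart]

theorem prependPart_injective (a : ℕ) : Function.Injective (prependPart a) := by
  intro f g h
  funext i
  simpa [prependPart] using congrFun h (i + 1)

protected theorem IsPartitionOf.prependPart (hf : IsPartitionOf n f) (ha : 0 < a) (hfa : f 0 ≤ a) :
    IsPartitionOf (n + a) (prependPart a f) := by
  obtain ⟨b, rfl⟩ := Nat.exists_eq_add_one.mpr ha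
  refine ⟨antitone_nat_of_succ_le ?_, ?_, ?_⟩
  · rintro (_ | i)
    · exact hfa
    · exact hf.antitone_s1 i.le_succ
  · rintro (_ | i) hi
    · omega
    · exact hf.apply_eq_zero (by omega)
  · rw [← add_assoc, sum_range_succ_prependPart, hf.sum_range (Nat.le_add_right n b), add_assoc]

protected theorem DominatedBy.prependPart (h : DominatedBy f g) (a : ℕ) :
    DominatedBy (prependPart a f) (prependPart a g) := by
  rintro (_ | k)
  · simp
  · simpa only [sum_range_succ_prependPart] using Nat.add_le_add_right (h k) a

theorem sum_range_addStrip (p a k : ℕ) (f : ℕ → ℕ) :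
    ∑ i ∈ Finset.range k, addStrip p a f i = ∑ i ∈ Finset.range k, f i + min (k - p) a := by
  induction k with
  | zero => simp
  | succ k ih =>
    rw [Finset.sum_range_succ, Finset.sum_range_succ, ih, addStrip]
    split_ifs <;> omega

theorem addStrip_injective (p a : ℕ) : Function.Injective (addStrip p a) := fun _ _ h =>
  funext fun i => Nat.add_right_cancel (congrFun h i)

protected theorem DominatedBy.addStrip {p q : ℕ} (h : DominatedBy f g) (hqp : q ≤ p) (a : ℕ) :
    DominatedBy (addStrip p a f) (addStrip q a g) := by
  intro k
  rw [sum_range_addStrip, sum_range_addStrip]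
  exact Nat.add_le_add (h k) (min_le_min_right a (Nat.sub_le_sub_left hqp k))

theorem IsPartitionOf.appendOnes_eq_addStrip (hf : IsPartitionOf n f) (a : ℕ) :
    appendOnes a f = addStrip (plength f) a f := by
  funext i
  have := hf.pos_iff_lt_plength i
  simp only [appendOnes, addStrip]
  split_ifs <;> omega

theorem IsPartitionOf.plength_appendOnes (hf : IsPartitionOf n f) (a : ℕ) :
    plength (appendOnes a f) = plength f + a := by
  refine plength_eq_of_pos_iff_lt fun i => ?_
  have := hf.pos_iff_lt_plength i
  rw [appendOnes]
  split_ifs <;> omega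

theorem IsPartitionOf.eq_of_appendOnes_eq (hf : IsPartitionOf n f) (hg : IsPartitionOf k g)
    (h : appendOnes a f = appendOnes a g) : f = g := by
  have plength_eq : plength f = plength g := by
    apply Nat.add_right_cancel (m := a)
    rw [← hf.plength_appendOnes, ← hg.plength_appendOnes, h]
  rw [hf.appendOnes_eq_addStrip, hg.appendOnes_eq_addStrip, plength_eq] at h
  exact addStrip_injective _ _ h

protected theorem IsPartitionOf.appendOnes (hf : IsPartitionOf n f) (a : ℕ) :
    IsPartitionOf (n + a) (appendOnes a f) := by
  have plength_le := hf.plength_le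
  refine ⟨fun i j hij => ?_, fun i hi => ?_, ?_⟩
  · have := hf.antitone_s1 hij
    have := hf.pos_iff_lt_plength i
    simp only [appendOnes]
    split_ifs <;> omega
  · rw [appendOnes, if_neg (by omega), if_neg (by omega)]
  · rw [hf.appendOnes_eq_addStrip, sum_range_addStrip, hf.sum_range (Nat.le_add_right n a)]
    omega

theorem DominatedBy.appendOnes_addStrip_zero (h : DominatedBy f g) (hf : IsPartitionOf n f)
    (a : ℕ) : DominatedBy (appendOnes a f) (addStrip 0 a g) := by
  rw [hf.appendOnes_eq_addStrip]
  exact h.addStrip (Nat.zero_le _) a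

theorem prependPart_ne_appendOnes (ha : 1 < a) (hga : g 0 < a) (f : ℕ → ℕ) (b : ℕ) :
    prependPart a f ≠ appendOnes b g := by
  intro h
  have first_parts_eq := congrFun h 0
  simp only [prependPart, appendOnes, if_true] at first_parts_eq
  split_ifs at first_parts_eq <;> omega

end

theorem prependPart_staircase (m : ℕ) : prependPart m (staircase (m - 1)) = staircase m := by
  funext i
  simp only [prependPart, staircase]
  split_ifs <;> omega

theorem addStrip_zero_staircase (m : ℕ) : addStrip 0 m (staircase (m - 1)) = staircase m := by
  funext i
  simp only [addStrip, staircase]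
  split_ifs <;> omega

theorem mul_succ_div_two (m : ℕ) : m * (m + 1) / 2 = (m - 1) * m / 2 + m := by
  simpa only [Nat.add_sub_cancel, mul_comm] using Nat.triangle_succ m

/-- for `λ ⊴ ρ_{m-1}` a partition of `(m-1)m/2`, both `(m, λ)` and
`(λ, 1^m)` are partitions of `m(m+1)/2` dominated by `ρ_m`; moreover for `λ ≠ μ`
the four resulting partitions are pairwise distinct. -/
theorem stmt1 (m : ℕ) (hm : 2 ≤ m) :
    (∀ f : ℕ → ℕ, IsPartitionOf ((m - 1) * m / 2) f → DominatedBy f (staircase (m - 1)) →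
      (IsPartitionOf (m * (m + 1) / 2) (prependPart m f) ∧
        DominatedBy (prependPart m f) (staircase m)) ∧
      (IsPartitionOf (m * (m + 1) / 2) (appendOnes m f) ∧
        DominatedBy (appendOnes m f) (staircase m))) ∧
    (∀ f g : ℕ → ℕ, IsPartitionOf ((m - 1) * m / 2) f → DominatedBy f (staircase (m - 1)) →
      IsPartitionOf ((m - 1) * m / 2) g → DominatedBy g (staircase (m - 1)) → f ≠ g →
      List.Pairwise (· ≠ ·)
        [prependPart m f, appendOnes m f, prependPart m g, appendOnes m g]) := by
  have first_part_lt {f : ℕ → ℕ} (hd : DominatedBy f (staircase (m - 1))) : f 0 < m :=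
    hd.apply_zero_le.trans_lt (by rw [staircase]; omega)
  refine ⟨fun f hf hd => ?_, fun f g hf hdf hg hdg hfg => ?_⟩
  · rw [mul_succ_div_two]
    refine ⟨⟨hf.prependPart (by omega) (first_part_lt hd).le, ?_⟩, hf.appendOnes m, ?_⟩
    · exact prependPart_staircase m ▸ hd.prependPart m
    · exact addStrip_zero_staircase m ▸ hd.appendOnes_addStrip_zero hf m
  · have prepend_ne_append {u v : ℕ → ℕ} (hv : DominatedBy v (staircase (m - 1))) :
        prependPart m u ≠ appendOnes m v :=
      prependPart_ne_appendOnes hm (first_part_lt hv) u m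
    have prepend_ne : prependPart m f ≠ prependPart m g := (prependPart_injective m).ne hfg
    have append_ne : appendOnes m f ≠ appendOnes m g := mt (hf.eq_of_appendOnes_eq hg) hfg
    simp [prepend_ne_append hdf, prepend_ne_append hdg, (prepend_ne_append hdf).symm,
      prepend_ne, append_ne]
end

section
/- Let k ≥ 1 and let m ≥ 4k² + 4k − 1 be integers, and let a_1, …, a_k and b_1, …, b_k be nonnegative integers satisfying m(m+1)/2 = k² + Σ_{i=1}^{k} i·a_i + Σ_{i=1}^{k} i·b_i. Then there exists an index i with 1 ≤ i ≤ k such that a_i ≥ 2m − 2i + 1 or b_i ≥ 2m − 2i + 1. -/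
/-!
Give the index `i` weight `i`, so that the total weight of `1, …, k` is `k (k + 1) / 2`. If the
partition has size at least `t k (k + 1)`, then, since its Durfee square has only
`k ^ 2 < k (k + 1)` cells, the weighted average of `a i + b i` exceeds `2 t - 2`, and hence some
`a i` or `b i` is at least `t`. The lower bound on `m` makes the size `m (m + 1) / 2` large enough
for `t = 2 m`, and `2 m - 2 i + 1 ≤ 2 m` for every `i ≥ 1`.
-/

open Finset

lemma exists_lt_of_sum_mul_lt_sum_mul {ι R : Type*} [NonUnitalNonAssocSemiring R]
    [LinearOrder R] [AddLeftMono R] [PosMulReflectLT R] {s : Finset ι} {w c : ι → R} {t : R}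
    (hw : ∀ i ∈ s, 0 ≤ w i) (h : (∑ i ∈ s, w i) * t < ∑ i ∈ s, w i * c i) :
    ∃ i ∈ s, t < c i := by
  rw [sum_mul] at h
  obtain ⟨i, hi, hlt⟩ := exists_lt_of_sum_lt h
  exact ⟨i, hi, lt_of_mul_lt_mul_left hlt (hw i hi)⟩

lemma sum_Icc_one_id_mul_two (k : ℕ) : (∑ i ∈ Icc 1 k, i) * 2 = k * (k + 1) := by
  have hrange : ∑ i ∈ range (k + 1), i = ∑ i ∈ Icc 1 k, i := by
    rw [sum_range_eq_add_Ico _ k.succ_pos, zero_add]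
    rfl
  rw [← hrange, sum_range_id_mul_two, Nat.add_sub_cancel, mul_comm]

lemma exists_le_or_le_of_mul_le_durfee_size {k t : ℕ} (hk : 1 ≤ k) {a b : ℕ → ℕ}
    (hsize : t * (k * (k + 1)) ≤
      k ^ 2 + (∑ i ∈ Icc 1 k, i * a i) + ∑ i ∈ Icc 1 k, i * b i) :
    ∃ i ∈ Icc 1 k, t ≤ a i ∨ t ≤ b i := by
  have hgauss := sum_Icc_one_id_mul_two k
  -- The average is taken of `a i + b i + 2`, to avoid the truncated subtraction in `2 * t - 2`.
  have haverage : (∑ i ∈ Icc 1 k, i) * (2 * t) < ∑ i ∈ Icc 1 k, i * (a i + b i + 2) :=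
    calc (∑ i ∈ Icc 1 k, i) * (2 * t) = t * (k * (k + 1)) := by rw [← hgauss]; ring
      _ ≤ k ^ 2 + (∑ i ∈ Icc 1 k, i * a i) + ∑ i ∈ Icc 1 k, i * b i := hsize
      _ < k * (k + 1) + (∑ i ∈ Icc 1 k, i * a i) + ∑ i ∈ Icc 1 k, i * b i := by
        gcongr
        linarith
      _ = ∑ i ∈ Icc 1 k, i * (a i + b i + 2) := by
        simp only [mul_add, sum_add_distrib, ← sum_mul, ← hgauss]
        ring
  obtain ⟨i, hi, hlt⟩ := exists_lt_of_sum_mul_lt_sum_mul (fun i _ ↦ i.zero_le) haverage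
  exact ⟨i, hi, by omega⟩

lemma two_mul_mul_le_mul_succ_div_two {m n : ℕ} (h : 4 * n ≤ m + 1) :
    2 * m * n ≤ m * (m + 1) / 2 := by
  rw [Nat.le_div_iff_mul_le two_pos]
  calc 2 * m * n * 2 = m * (4 * n) := by ring
    _ ≤ m * (m + 1) := by gcongr

theorem stmt5_general {k m : ℕ} (hk : 1 ≤ k) (hm : 4 * k ^ 2 + 4 * k - 1 ≤ m) {a b : ℕ → ℕ}
    (hsize : m * (m + 1) / 2 ≤
      k ^ 2 + (∑ i ∈ Icc 1 k, i * a i) + ∑ i ∈ Icc 1 k, i * b i) :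
    ∃ i ∈ Icc 1 k, 2 * m ≤ a i ∨ 2 * m ≤ b i := by
  have hm' : 4 * (k * (k + 1)) ≤ m + 1 := by
    rw [show 4 * (k * (k + 1)) = 4 * k ^ 2 + 4 * k by ring]
    omega
  exact exists_le_or_le_of_mul_le_durfee_size hk
    ((two_mul_mul_le_mul_succ_div_two hm').trans hsize)

/-- if `m ≥ 4k² + 4k - 1` and
`m(m+1)/2 = k² + Σ_{i=1}^k i·a_i + Σ_{i=1}^k i·b_i`, then some `i` with
`1 ≤ i ≤ k` satisfies `a_i ≥ 2m - 2i + 1` or `b_i ≥ 2m - 2i + 1`. -/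
theorem stmt5 (k m : ℕ) (hk : 1 ≤ k) (hm : 4 * k ^ 2 + 4 * k - 1 ≤ m)
    (a b : ℕ → ℕ)
    (hsum : m * (m + 1) / 2 =
      k ^ 2 + (∑ i ∈ Finset.Icc 1 k, i * a i) + ∑ i ∈ Finset.Icc 1 k, i * b i) :
    ∃ i ∈ Finset.Icc 1 k, 2 * m - 2 * i + 1 ≤ a i ∨ 2 * m - 2 * i + 1 ≤ b i := by
  obtain ⟨i, hi, h⟩ := stmt5_general hk hm hsum.le
  exact ⟨i, hi, by grind⟩
end

section
/- Let m be an even positive integer and let k be an integer with 0 ≤ k ≤ m. Then there exists a self-conjugate partition λ of m(m+1)/2 + k such that ρ_m ⊆ λ ⊆ ρ_{m+1}, where ⊆ denotes containment of Young diagrams. -/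
theorem lt_sum_range_succ_of_antitone {f : ℕ → ℕ} (hf : Antitone f) {i : ℕ} (hi : f i ≠ 0) :
    i < ∑ j ∈ Finset.range (i + 1), f j := by
  have one_le : ∀ j ∈ Finset.range (i + 1), 1 ≤ f j := fun j hj =>
    (Nat.one_le_iff_ne_zero.mpr hi).trans (hf (Finset.mem_range_succ_iff.mp hj))
  simpa using Finset.card_nsmul_le_sum _ _ _ one_le

theorem isPartitionOf_of_antitone {f : ℕ → ℕ} {N n : ℕ} (hf : Antitone f)
    (hzero : ∀ i, N ≤ i → f i = 0) (hsum : ∑ i ∈ Finset.range N, f i = n) :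
    IsPartitionOf n f := by
  have hzero' : ∀ i, n ≤ i → f i = 0 := by
    intro i hni
    by_contra hi
    have hiN : i < N := not_le.mp fun h => hi (hzero i h)
    have hle : ∑ j ∈ Finset.range (i + 1), f j ≤ ∑ j ∈ Finset.range N, f j :=
      Finset.sum_le_sum_of_subset (Finset.range_mono hiN)
    have hlt := lt_sum_range_succ_of_antitone hf hi
    omega
  refine ⟨fun _ _ hij => hf hij, hzero', ?_⟩
  rcases le_total N n with h | h
  · rw [Finset.eventually_constant_sum hzero h, hsum]
  · rw [← Finset.eventually_constant_sum hzero' h, hsum]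

theorem conjugate_eq_of_lt_iff_lt {f g : ℕ → ℕ} (h : ∀ i j, i < f j ↔ j < g i) :
    conjugate f = g := by
  funext i
  have hrow : {j | i < f j} = Set.Iio (g i) := Set.ext (h i)
  rw [conjugate, hrow, Set.ncard_Iio_nat]

theorem sum_range_staircase (m : ℕ) :
    ∑ i ∈ Finset.range (m + 1), staircase m i = m * (m + 1) / 2 := by
  calc ∑ i ∈ Finset.range (m + 1), staircase m i
      = ∑ i ∈ Finset.range (m + 1), i := Finset.sum_flip fun i => i
    _ = m * (m + 1) / 2 := by rw [Finset.sum_range_id, Nat.add_sub_cancel, mul_comm]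

theorem antitone_of_staircase_le_of_le_staircase {m : ℕ} {f : ℕ → ℕ} (hlower : staircase m ≤ f)
    (hupper : f ≤ staircase (m + 1)) : Antitone f := by
  intro i j hij
  rcases hij.eq_or_lt with rfl | hlt
  · exact le_rfl
  · calc f j ≤ staircase (m + 1) j := hupper j
      _ ≤ staircase m i := by unfold staircase; omega
      _ ≤ f i := hlower i

/-- The row lengths of the diagram `ρ_m` with one cell added in each row of `S`. For `i ≤ m` the
cell added in row `i` is the antidiagonal cell `(i, m - i)`. -/
def augmentedStaircase (m : ℕ) (S : Finset ℕ) : ℕ → ℕ :=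
  fun i => staircase m i + if i ∈ S then 1 else 0

section augmentedStaircase

variable {m : ℕ} {S : Finset ℕ}

theorem staircase_le_augmentedStaircase : staircase m ≤ augmentedStaircase m S :=
  fun _ => Nat.le_add_right _ _

theorem lt_augmentedStaircase_iff (hS : S ⊆ Finset.range (m + 1)) {i j : ℕ} :
    j < augmentedStaircase m S i ↔ i + j < m ∨ i + j = m ∧ i ∈ S := by
  unfold augmentedStaircase staircase
  split_ifs with hi
  · have him : i ≤ m := Finset.mem_range_succ_iff.mp (hS hi)
    simp only [hi, and_true]
    omega
  · simp only [hi, and_false, or_false]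
    omega

theorem augmentedStaircase_le_staircase_succ (hS : S ⊆ Finset.range (m + 1)) :
    augmentedStaircase m S ≤ staircase (m + 1) := by
  refine fun i => le_of_forall_lt fun j hj => ?_
  have hij : i + j ≤ m := ((lt_augmentedStaircase_iff hS).mp hj).elim le_of_lt fun h => h.1.le
  exact Nat.lt_sub_of_add_lt (by omega)

theorem sum_range_augmentedStaircase (hS : S ⊆ Finset.range (m + 1)) :
    ∑ i ∈ Finset.range (m + 1), augmentedStaircase m S i = m * (m + 1) / 2 + S.card := by
  simp only [augmentedStaircase, Finset.sum_add_distrib, sum_range_staircase, Finset.sum_ite_mem,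
    Finset.inter_eq_right.mpr hS, Finset.sum_const, smul_eq_mul, mul_one]

theorem isPartitionOf_augmentedStaircase (hS : S ⊆ Finset.range (m + 1)) :
    IsPartitionOf (m * (m + 1) / 2 + S.card) (augmentedStaircase m S) := by
  have hupper := augmentedStaircase_le_staircase_succ hS
  have hanti := antitone_of_staircase_le_of_le_staircase staircase_le_augmentedStaircase hupper
  refine isPartitionOf_of_antitone hanti (fun i hi => ?_) (sum_range_augmentedStaircase hS)
  exact Nat.le_zero.mp ((hupper i).trans_eq (Nat.sub_eq_zero_of_le hi))

theorem conjugate_augmentedStaircase (hS : S ⊆ Finset.range (m + 1))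
    (hsymm : ∀ i j, i + j = m → (i ∈ S ↔ j ∈ S)) :
    conjugate (augmentedStaircase m S) = augmentedStaircase m S := by
  refine conjugate_eq_of_lt_iff_lt fun i j => ?_
  rw [lt_augmentedStaircase_iff hS, lt_augmentedStaircase_iff hS, add_comm j i]
  exact or_congr_right (and_congr_right fun hij => (hsymm i j hij).symm)

end augmentedStaircase

theorem exists_reflection_stable_subset_card_eq {m k : ℕ} (hk : k ≤ m + 1)
    (hparity : Even m ∨ Even k) :
    ∃ S ⊆ Finset.range (m + 1), S.card = k ∧ ∀ i j, i + j = m → (i ∈ S ↔ j ∈ S) := by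
  rcases Nat.even_or_odd' k with ⟨c, rfl | rfl⟩
  · have hsub : Finset.Ico c (m + 1 - c) ⊆ Finset.range (m + 1) := by
      intro i hi
      simp only [Finset.mem_Ico, Finset.mem_range] at hi ⊢
      omega
    refine ⟨Finset.range (m + 1) \ Finset.Ico c (m + 1 - c), Finset.sdiff_subset, ?_, ?_⟩
    · rw [Finset.card_sdiff_of_subset hsub, Finset.card_range, Nat.card_Ico]
      omega
    · intro i j hij
      simp only [Finset.mem_sdiff, Finset.mem_range, Finset.mem_Ico]
      omega
  · obtain ⟨a, rfl⟩ : Even m := hparity.resolve_right (by simp)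
    refine ⟨Finset.Ico (a - c) (a + c + 1), ?_, ?_, ?_⟩
    · intro i hi
      simp only [Finset.mem_Ico, Finset.mem_range] at hi ⊢
      omega
    · rw [Nat.card_Ico]
      omega
    · intro i j hij
      simp only [Finset.mem_Ico]
      omega

theorem stmt16_general (m k : ℕ) (hk : k ≤ m + 1) (hparity : Even m ∨ Even k) :
    ∃ l : ℕ → ℕ, IsPartitionOf (m * (m + 1) / 2 + k) l ∧ conjugate l = l ∧
      (∀ i, staircase m i ≤ l i) ∧ (∀ i, l i ≤ staircase (m + 1) i) := by
  obtain ⟨S, hS, rfl, hsymm⟩ := exists_reflection_stable_subset_card_eq hk hparity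
  exact ⟨augmentedStaircase m S, isPartitionOf_augmentedStaircase hS,
    conjugate_augmentedStaircase hS hsymm, staircase_le_augmentedStaircase,
    augmentedStaircase_le_staircase_succ hS⟩

/-- for even `m > 0` and `0 ≤ k ≤ m` there is a self-conjugate
partition `λ` of `m(m+1)/2 + k` with `ρ_m ⊆ λ ⊆ ρ_{m+1}` (Young-diagram
containment). -/
theorem stmt16 (m k : ℕ) (hm : 0 < m) (heven : Even m) (hk : k ≤ m) :
    ∃ l : ℕ → ℕ, IsPartitionOf (m * (m + 1) / 2 + k) l ∧ conjugate l = l ∧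
      (∀ i, staircase m i ≤ l i) ∧ (∀ i, l i ≤ staircase (m + 1) i) :=
  stmt16_general m k (hk.trans m.le_succ) (Or.inl heven)
end
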